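/- arXiv:1306.5829 — 2 statements merged into one kernel-verified Lean document; each statement's English description precedes it below -/
import Mathlib

section
/- Let n ≥ 2, let 0 < σ ≤ 1, let K ⊆ ℝⁿ be a convex body containing the unit ball B_n centered at the origin, and let f be the probability density proportional to e^{−‖x‖²/(2σ²)} restricted to K. If 0 < δ ≤ σ/(4096√n), then the average local conductance satisfies λ(f) = ∫_K ℓ(x) f(x) dx ≥ 1/2, where ℓ(x) = vol(K ∩ (x + δB_n))/vol(δB_n). -/
open MeasureTheory Real Set Metric

/-!
By Fubini, the Gaussian mass that leaves `K` in one step is, up to the factor `vol (δB)`, the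
integral over `y ∉ K` of the Gaussian mass of `K ∩ B(y, δ)`. The gauge of `K` has a supporting
vector `s` at `y`: `‖s‖ ≤ 1 / ρ`, `⟪s, y⟫ = gauge K y`, and `⟪s, x⟫ ≤ 1` on `K`. Hence, for
`a ≥ 0`, the Gaussian `exp (-c‖x‖²)` is at most
`exp (-a (gauge K y - 1) - c‖y‖²) * exp ⟪a s + 2 c y, y - x⟫` for `x ∈ K`. The last factor is
averaged over the ball: by rotation invariance its average depends only on `‖a s + 2 c y‖`, so the
vector may be replaced by a random sign vector of the same length, which makes the average
sub-Gaussian with variance `δ² / n`. The resulting integral over `Kᶜ` of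
`exp (-a (gauge K y - 1) - b‖y‖²)`, with `b` slightly smaller than `c`, is compared with itself
under the dilation by `r = 1 + 1 / (10 n)`, which costs only a factor `rⁿ` in volume but gains
`exp (-a (r - 1))` outside `K`.
-/

open Module (finrank)
open scoped RealInnerProductSpace

section InnerProductSpace

variable {E : Type*} [NormedAddCommGroup E] [InnerProductSpace ℝ E] [MeasurableSpace E]

theorem integral_comp_inner_eq_of_norm_eq [BorelSpace E] {F : Type*} [NormedAddCommGroup F]
    [NormedSpace ℝ F] {μ : Measure E} (hμ : ∀ T : E ≃ₗᵢ[ℝ] E, MeasurePreserving T μ μ)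
    (g : ℝ → F) {v w : E} (hvw : ‖v‖ = ‖w‖) : ∫ u, g ⟪v, u⟫ ∂μ = ∫ u, g ⟪w, u⟫ ∂μ := by
  set T := (ℝ ∙ (v - w))ᗮ.reflection
  have hTv : T v = w := Submodule.reflection_sub hvw
  calc ∫ u, g ⟪v, u⟫ ∂μ
    _ = ∫ u, g ⟪T v, T u⟫ ∂μ := by simp only [LinearIsometryEquiv.inner_map_map]
    _ = ∫ u, g ⟪w, u⟫ ∂μ := by
        rw [hTv, (hμ T).integral_comp T.toHomeomorph.measurableEmbedding fun u ↦ g ⟪w, u⟫]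

end InnerProductSpace

section SignVector

variable {E : Type*} [NormedAddCommGroup E] [InnerProductSpace ℝ E] {ι : Type*} [Fintype ι]

/-- The vertex of the cube `[-1, 1]^ι`, in the coordinates of the orthonormal basis `b`, whose
coordinates have the signs `ε`. Averaging `exp ⟪·, u⟫` over all vertices makes it factor. -/
noncomputable def signVector (b : OrthonormalBasis ι ℝ E) (ε : ι → ℤˣ) : E :=
  ∑ i, ((ε i : ℤ) : ℝ) • b i

theorem norm_signVector (b : OrthonormalBasis ι ℝ E) (ε : ι → ℤˣ) :
    ‖signVector b ε‖ = √(Fintype.card ι) := by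
  have hsq (i : ι) : ((ε i : ℤ) : ℝ) * (ε i : ℤ) = 1 := by exact_mod_cast Int.units_coe_mul_self _
  rw [norm_eq_sqrt_real_inner, signVector, b.orthonormal.inner_sum]
  simp [hsq]

theorem sum_exp_mul_inner_signVector [DecidableEq ι] (b : OrthonormalBasis ι ℝ E) (t : ℝ)
    (u : E) :
    ∑ ε, exp (t * ⟪signVector b ε, u⟫) = ∏ i, 2 * cosh (t * ⟪b i, u⟫) := by
  have hfactor (ε : ι → ℤˣ) :
      exp (t * ⟪signVector b ε, u⟫) = ∏ i, exp ((ε i : ℤ) * (t * ⟪b i, u⟫)) := by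
    rw [← exp_sum, signVector, sum_inner, Finset.mul_sum]
    simp only [real_inner_smul_left, mul_left_comm t]
  have hcosh (x : ℝ) : ∑ s : ℤˣ, exp ((s : ℤ) * x) = 2 * cosh x := by
    simp [UnitsInt.univ, cosh_eq, mul_div_cancel₀]
  simp only [hfactor, ← hcosh]
  exact (Fintype.prod_sum fun i (s : ℤˣ) ↦ exp ((s : ℤ) * (t * ⟪b i, u⟫))).symm

theorem sum_exp_mul_inner_signVector_le [DecidableEq ι] (b : OrthonormalBasis ι ℝ E) (t : ℝ)
    (u : E) :
    ∑ ε, exp (t * ⟪signVector b ε, u⟫) ≤ 2 ^ Fintype.card ι * exp (t ^ 2 * ‖u‖ ^ 2 / 2) :=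
  calc ∑ ε, exp (t * ⟪signVector b ε, u⟫)
    _ = ∏ i, 2 * cosh (t * ⟪b i, u⟫) := sum_exp_mul_inner_signVector b t u
    _ ≤ ∏ i, 2 * exp ((t * ⟪b i, u⟫) ^ 2 / 2) := by
        gcongr
        exact cosh_le_exp_half_sq _
    _ = 2 ^ Fintype.card ι * exp (t ^ 2 * ‖u‖ ^ 2 / 2) := by
        rw [Finset.prod_mul_distrib, Finset.prod_const, Finset.card_univ, ← exp_sum,
          ← b.sum_sq_inner_right u, Finset.mul_sum, Finset.sum_div]
        simp only [mul_pow]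

end SignVector

section MomentGeneratingFunction

variable {E : Type*} [NormedAddCommGroup E] [InnerProductSpace ℝ E] [FiniteDimensional ℝ E]
  [MeasurableSpace E] [BorelSpace E]

theorem integrable_exp_inner_of_norm_le {μ : Measure E} [IsFiniteMeasure μ] {δ : ℝ}
    (hδ : ∀ᵐ u ∂μ, ‖u‖ ≤ δ) (v : E) : Integrable (fun u ↦ exp ⟪v, u⟫) μ := by
  refine .of_bound (by fun_prop) (exp (‖v‖ * δ)) ?_
  filter_upwards [hδ] with u hu
  rw [norm_of_nonneg (exp_pos _).le]
  gcongr
  exact (real_inner_le_norm v u).trans (by gcongr)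

theorem integral_exp_inner_le_of_measurePreserving [Nontrivial E] {μ : Measure E}
    [IsFiniteMeasure μ] (hμ : ∀ T : E ≃ₗᵢ[ℝ] E, MeasurePreserving T μ μ) {δ : ℝ}
    (hδ : ∀ᵐ u ∂μ, ‖u‖ ≤ δ) (v : E) :
    ∫ u, exp ⟪v, u⟫ ∂μ ≤ μ.real univ * exp (‖v‖ ^ 2 * δ ^ 2 / (2 * finrank ℝ E)) := by
  set b := stdOrthonormalBasis ℝ E
  have hn : (0 : ℝ) < finrank ℝ E := mod_cast Module.finrank_pos
  set t : ℝ := ‖v‖ / √(finrank ℝ E) with ht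
  have hnorm (ε : Fin (finrank ℝ E) → ℤˣ) : ‖v‖ = ‖t • signVector b ε‖ := by
    rw [norm_smul, norm_signVector, Fintype.card_fin, norm_of_nonneg (by positivity),
      div_mul_cancel₀ _ (by positivity)]
  have havg : 2 ^ finrank ℝ E * ∫ u, exp ⟪v, u⟫ ∂μ =
      ∫ u, ∑ ε, exp ⟪t • signVector b ε, u⟫ ∂μ := by
    rw [integral_finsetSum _ fun ε _ ↦ integrable_exp_inner_of_norm_le hδ _]
    simp only [← integral_comp_inner_eq_of_norm_eq hμ exp (hnorm _)]
    simp
  have hbound : ∀ᵐ u ∂μ, ∑ ε, exp ⟪t • signVector b ε, u⟫ ≤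
      2 ^ finrank ℝ E * exp (‖v‖ ^ 2 * δ ^ 2 / (2 * finrank ℝ E)) := by
    filter_upwards [hδ] with u hu
    simp only [real_inner_smul_left]
    refine (sum_exp_mul_inner_signVector_le b t u).trans ?_
    rw [Fintype.card_fin, ht, div_pow, sq_sqrt hn.le, div_mul_eq_mul_div, div_div,
      mul_comm (2 : ℝ) (finrank ℝ E : ℝ)]
    gcongr
  refine le_of_mul_le_mul_left ?_ (show (0 : ℝ) < 2 ^ finrank ℝ E by positivity)
  calc 2 ^ finrank ℝ E * ∫ u, exp ⟪v, u⟫ ∂μ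
    _ = ∫ u, ∑ ε, exp ⟪t • signVector b ε, u⟫ ∂μ := havg
    _ ≤ ∫ _, 2 ^ finrank ℝ E * exp (‖v‖ ^ 2 * δ ^ 2 / (2 * finrank ℝ E)) ∂μ :=
        integral_mono_ae (integrable_finsetSum _ fun ε _ ↦ integrable_exp_inner_of_norm_le hδ _)
          (integrable_const _) hbound
    _ = _ := by rw [integral_const, smul_eq_mul]; ring

theorem setIntegral_closedBall_exp_inner_le [Nontrivial E] (v : E) (δ : ℝ) :
    ∫ u in closedBall 0 δ, exp ⟪v, u⟫ ≤
      volume.real (closedBall (0 : E) δ) * exp (‖v‖ ^ 2 * δ ^ 2 / (2 * finrank ℝ E)) := by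
  have hT (T : E ≃ₗᵢ[ℝ] E) : MeasurePreserving T (volume.restrict (closedBall 0 δ))
      (volume.restrict (closedBall 0 δ)) := by
    simpa using T.measurePreserving.restrict_preimage
      (measurableSet_closedBall (x := (0 : E)) (ε := δ))
  have : IsFiniteMeasure (volume.restrict (closedBall (0 : E) δ)) :=
    isFiniteMeasure_restrict.2 measure_closedBall_lt_top.ne
  have hδ : ∀ᵐ u ∂volume.restrict (closedBall (0 : E) δ), ‖u‖ ≤ δ := by
    filter_upwards [ae_restrict_mem measurableSet_closedBall] with u hu
    exact mem_closedBall_zero_iff.1 hu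
  simpa using integral_exp_inner_le_of_measurePreserving hT hδ v

theorem setIntegral_closedBall_comp_sub_left {F : Type*} [NormedAddCommGroup F] [NormedSpace ℝ F]
    (g : E → F) (y : E) (δ : ℝ) :
    ∫ x in closedBall y δ, g (y - x) = ∫ u in closedBall 0 δ, g u := by
  rw [← integral_indicator measurableSet_closedBall, ← integral_indicator measurableSet_closedBall,
    ← integral_sub_left_eq_self ((closedBall 0 δ).indicator g) volume y]
  congr 1 with x
  simp only [indicator, mem_closedBall, dist_eq_norm, sub_zero, norm_sub_rev]

theorem setIntegral_closedBall_exp_inner_sub_le [Nontrivial E] (v y : E) (δ : ℝ) :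
    ∫ x in closedBall y δ, exp ⟪v, y - x⟫ ≤
      volume.real (closedBall (0 : E) δ) * exp (‖v‖ ^ 2 * δ ^ 2 / (2 * finrank ℝ E)) :=
  (setIntegral_closedBall_comp_sub_left (fun u ↦ exp ⟪v, u⟫) y δ).trans_le
    (setIntegral_closedBall_exp_inner_le v δ)

end MomentGeneratingFunction

section Gauge

theorem exists_linearMap_apply_eq_gauge {V : Type*} [AddCommGroup V] [Module ℝ V] {K : Set V}
    (hK : Convex ℝ K) (hK₀ : Absorbent ℝ K) (y : V) :
    ∃ f : V →ₗ[ℝ] ℝ, f y = gauge K y ∧ ∀ x, f x ≤ gauge K x := by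
  have hwd (c : ℝ) (hc : c • y = 0) : c • gauge K y = 0 := by
    rcases smul_eq_zero.1 hc with rfl | rfl <;> simp
  obtain ⟨f, hf, hle⟩ := exists_extension_of_le_sublinear (.mkSpanSingleton' y (gauge K y) hwd)
    (gauge K) (fun c hc ↦ gauge_smul_of_nonneg hc.le) (gauge_add_le hK hK₀) (by
      rintro ⟨x, hx⟩
      obtain ⟨c, rfl⟩ := Submodule.mem_span_singleton.1 hx
      rw [LinearPMap.mkSpanSingleton'_apply]
      rcases le_total 0 c with hc | hc
      · exact (gauge_smul_of_nonneg hc y).ge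
      · exact (mul_nonpos_of_nonpos_of_nonneg hc (gauge_nonneg y)).trans (gauge_nonneg _))
  refine ⟨f, ?_, hle⟩
  exact (hf ⟨y, Submodule.mem_span_singleton_self y⟩).trans
    (LinearPMap.mkSpanSingleton'_apply_self ..)

theorem one_le_gauge_of_ball_subset {V : Type*} [NormedAddCommGroup V] [NormedSpace ℝ V] {K : Set V}
    {ρ : ℝ} (hK : Convex ℝ K) (hρ : 0 < ρ) (hball : ball 0 ρ ⊆ K) {y : V} (hy : y ∉ K) :
    1 ≤ gauge K y :=
  one_le_gauge_of_notMem (hK.starConvex (hball (mem_ball_self hρ)))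
    ((absorbent_ball_zero hρ).mono hball y) hy

variable {E : Type*} [NormedAddCommGroup E] [InnerProductSpace ℝ E] {K : Set E} {ρ : ℝ}

theorem exists_inner_eq_gauge [CompleteSpace E] (hK : Convex ℝ K) (hρ : 0 < ρ)
    (hball : ball 0 ρ ⊆ K) (y : E) :
    ∃ s : E, ‖s‖ ≤ ρ⁻¹ ∧ ⟪s, y⟫ = gauge K y ∧ ∀ x, ⟪s, x⟫ ≤ gauge K x := by
  obtain ⟨f, hfy, hf⟩ := exists_linearMap_apply_eq_gauge hK
    ((absorbent_ball_zero hρ).mono hball) y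
  have hle (x : E) : f x ≤ ρ⁻¹ * ‖x‖ :=
    (hf x).trans ((le_inv_mul_iff₀ hρ).2 (mul_gauge_le_norm hball))
  have habs (x : E) : ‖f x‖ ≤ ρ⁻¹ * ‖x‖ := abs_le.2 ⟨by
    simpa [neg_le] using hle (-x), hle x⟩
  have hs (x : E) : ⟪(InnerProductSpace.toDual ℝ E).symm (f.mkContinuous ρ⁻¹ habs), x⟫ = f x :=
    InnerProductSpace.toDual_symm_apply
  refine ⟨(InnerProductSpace.toDual ℝ E).symm (f.mkContinuous ρ⁻¹ habs), ?_, ?_, ?_⟩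
  · rw [LinearIsometryEquiv.norm_map]
    exact f.mkContinuous_norm_le (by positivity) habs
  · rw [hs, hfy]
  · simpa only [hs] using hf

end Gauge

section Dilation

variable {E : Type*} [NormedAddCommGroup E] [NormedSpace ℝ E] [FiniteDimensional ℝ E]
  [MeasurableSpace E] [BorelSpace E]

theorem integral_le_mul_of_dilation_le (μ : Measure E) [μ.IsAddHaarMeasure] {K : Set E}
    (hK : NullMeasurableSet K μ) {W g : E → ℝ} (hW : Integrable W μ) (hg : IntegrableOn g K μ)
    {q r : ℝ} (hr : 0 < r) (hin : ∀ y ∈ K, W (r • y) ≤ g y)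
    (hout : ∀ y ∈ Kᶜ, W (r • y) ≤ q * W y) :
    ∫ y, W y ∂μ ≤ r ^ finrank ℝ E * ((∫ y in K, g y ∂μ) + q * ∫ y in Kᶜ, W y ∂μ) := by
  have hWr : Integrable (fun y ↦ W (r • y)) μ := hW.comp_smul hr.ne'
  calc ∫ y, W y ∂μ
    _ = r ^ finrank ℝ E * ∫ y, W (r • y) ∂μ := by
        rw [Measure.integral_comp_smul, abs_of_pos (by positivity), smul_eq_mul,
          mul_inv_cancel_left₀ (by positivity)]
    _ = r ^ finrank ℝ E * ((∫ y in K, W (r • y) ∂μ) + ∫ y in Kᶜ, W (r • y) ∂μ) := by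
        rw [integral_add_compl₀ hK hWr]
    _ ≤ r ^ finrank ℝ E * ((∫ y in K, g y ∂μ) + ∫ y in Kᶜ, q * W y ∂μ) := by
        gcongr _ * (?_ + ?_)
        · exact setIntegral_mono_on₀ hWr.integrableOn hg hK hin
        · exact setIntegral_mono_on₀ hWr.integrableOn (hW.const_mul q).integrableOn hK.compl hout
    _ = r ^ finrank ℝ E * ((∫ y in K, g y ∂μ) + q * ∫ y in Kᶜ, W y ∂μ) := by
        rw [integral_const_mul]

end Dilation

section PenalizedGaussian

variable {E : Type*} [NormedAddCommGroup E]

/-- The Gaussian weight `exp (-c‖y‖²)`, damped outside `K` at the exponential rate `a` in the gauge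
of `K`. It dominates the mass that a ball walk started at `y ∉ K` would move into `K`, and its tail
outside `K` can be estimated by dilation. -/
noncomputable def penalizedGaussian [NormedSpace ℝ E] (K : Set E) (a c : ℝ) (y : E) : ℝ :=
  exp (-(a * max (gauge K y - 1) 0) - c * ‖y‖ ^ 2)

theorem penalizedGaussian_of_mem [NormedSpace ℝ E] {K : Set E} {y : E} (hy : y ∈ K) (a c : ℝ) :
    penalizedGaussian K a c y = exp (-(c * ‖y‖ ^ 2)) := by
  rw [penalizedGaussian, max_eq_right (sub_nonpos.2 (gauge_le_one_of_mem hy))]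
  simp

theorem penalizedGaussian_smul_le [NormedSpace ℝ E] (K : Set E) {a c r : ℝ} (ha : 0 ≤ a)
    (hr : 0 < r) (y : E) : penalizedGaussian K a (c / r ^ 2) (r • y) ≤ exp (-(c * ‖y‖ ^ 2)) := by
  have hnorm : c / r ^ 2 * ‖r • y‖ ^ 2 = c * ‖y‖ ^ 2 := by
    rw [norm_smul, norm_of_nonneg hr.le]
    field_simp
  have hpenalty : 0 ≤ a * max (gauge K (r • y) - 1) 0 := by positivity
  rw [penalizedGaussian, hnorm]
  gcongr
  linarith

theorem penalizedGaussian_smul_le_of_one_le_gauge [NormedSpace ℝ E] {K : Set E} {y : E}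
    (hy : 1 ≤ gauge K y) {a c r : ℝ} (ha : 0 ≤ a) (hc : 0 ≤ c) (hr : 1 ≤ r) :
    penalizedGaussian K a c (r • y) ≤ exp (-(a * (r - 1))) * penalizedGaussian K a c y := by
  have hgauge : gauge K (r • y) = r * gauge K y := gauge_smul_of_nonneg (by linarith) y
  have hgrow : (r - 1) + (gauge K y - 1) ≤ r * gauge K y - 1 := by nlinarith
  have hnorm : ‖y‖ ≤ ‖r • y‖ := by
    rw [norm_smul]
    exact le_mul_of_one_le_left (norm_nonneg y) (hr.trans (le_norm_self r))
  rw [penalizedGaussian, penalizedGaussian, ← exp_add, hgauge, max_eq_left (by linarith),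
    max_eq_left (by nlinarith)]
  have hpenalty := mul_le_mul_of_nonneg_left hgrow ha
  have hgaussian : c * ‖y‖ ^ 2 ≤ c * ‖r • y‖ ^ 2 := by gcongr
  gcongr
  linarith

variable [InnerProductSpace ℝ E] [FiniteDimensional ℝ E] [MeasurableSpace E] [BorelSpace E]
  {K : Set E} {a c r ρ : ℝ}

theorem integrable_exp_neg_mul_sq_norm (hc : 0 < c) :
    Integrable fun x : E ↦ exp (-(c * ‖x‖ ^ 2)) := by
  refine (GaussianFourier.integrable_cexp_neg_mul_sq_norm_add (V := E) (b := (c : ℂ))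
    (by simpa using hc) 0 0).norm.congr (.of_forall fun x ↦ ?_)
  simp [Complex.norm_exp, ← Complex.ofReal_pow]

theorem integrable_penalizedGaussian (hK : Convex ℝ K) (hK₀ : K ∈ nhds 0) (ha : 0 ≤ a)
    (hc : 0 < c) : Integrable (penalizedGaussian K a c) := by
  refine (integrable_exp_neg_mul_sq_norm hc).mono' ?_ (.of_forall fun y ↦ ?_)
  · have : Continuous (gauge K) := continuous_gauge hK hK₀
    unfold penalizedGaussian
    fun_prop
  · have hpenalty : 0 ≤ a * max (gauge K y - 1) 0 := by positivity
    rw [penalizedGaussian, norm_of_nonneg (exp_pos _).le]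
    gcongr
    linarith

theorem setIntegral_add_setIntegral_compl_penalizedGaussian_le (hK : Convex ℝ K) (hρ : 0 < ρ)
    (hball : ball 0 ρ ⊆ K) (ha : 0 ≤ a) (hc : 0 < c) (hr : 1 ≤ r) :
    (∫ y in K, exp (-(c * ‖y‖ ^ 2))) + ∫ y in Kᶜ, penalizedGaussian K a (c / r ^ 2) y ≤
      r ^ finrank ℝ E * ((∫ y in K, exp (-(c * ‖y‖ ^ 2))) +
        exp (-(a * (r - 1))) * ∫ y in Kᶜ, penalizedGaussian K a (c / r ^ 2) y) := by
  have hr₀ : 0 < r := by linarith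
  have hKm : NullMeasurableSet K := hK.nullMeasurableSet volume
  have hgaussian : IntegrableOn (fun y : E ↦ exp (-(c * ‖y‖ ^ 2))) K :=
    (integrable_exp_neg_mul_sq_norm hc).integrableOn
  have hW : Integrable (penalizedGaussian K a (c / r ^ 2)) :=
    integrable_penalizedGaussian hK (Filter.mem_of_superset (ball_mem_nhds 0 hρ) hball) ha
      (by positivity)
  calc (∫ y in K, exp (-(c * ‖y‖ ^ 2))) + ∫ y in Kᶜ, penalizedGaussian K a (c / r ^ 2) y
    _ ≤ (∫ y in K, penalizedGaussian K a (c / r ^ 2) y) +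
          ∫ y in Kᶜ, penalizedGaussian K a (c / r ^ 2) y := by
        gcongr ?_ + _
        refine setIntegral_mono_on₀ hgaussian hW.integrableOn hKm fun y hy ↦ ?_
        rw [penalizedGaussian_of_mem hy]
        gcongr
        exact div_le_self hc.le (one_le_pow₀ hr)
    _ = ∫ y, penalizedGaussian K a (c / r ^ 2) y := integral_add_compl₀ hKm hW
    _ ≤ _ := integral_le_mul_of_dilation_le volume hKm hW hgaussian hr₀
        (fun y _ ↦ penalizedGaussian_smul_le K ha hr₀ y)
        (fun y hy ↦ penalizedGaussian_smul_le_of_one_le_gauge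
          (one_le_gauge_of_ball_subset hK hρ hball hy) ha (by positivity) hr)

theorem setIntegral_compl_penalizedGaussian_le [Nontrivial E] (hK : Convex ℝ K) (hρ : 0 < ρ)
    (hball : ball 0 ρ ⊆ K) (hc : 0 < c) :
    ∫ y in Kᶜ, penalizedGaussian K (20 * finrank ℝ E) (c / (1 + 1 / (10 * finrank ℝ E)) ^ 2) y ≤
      1 / 4 * ∫ y in K, exp (-(c * ‖y‖ ^ 2)) := by
  have hn : (0 : ℝ) < finrank ℝ E := mod_cast Module.finrank_pos
  set r : ℝ := 1 + 1 / (10 * finrank ℝ E) with hr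
  have hr₁ : 1 ≤ r := le_add_of_nonneg_right (by positivity)
  have hvolume : r ^ finrank ℝ E ≤ 10 / 9 :=
    calc r ^ finrank ℝ E
      _ ≤ exp (1 / (10 * finrank ℝ E)) ^ finrank ℝ E := by
          gcongr
          linarith [add_one_le_exp (1 / (10 * finrank ℝ E : ℝ))]
      _ = exp (1 / 10) := by
          rw [← exp_nat_mul]
          field_simp
      _ ≤ 1 / (1 - 1 / 10) := exp_bound_div_one_sub_of_interval (by norm_num) (by norm_num)
      _ = 10 / 9 := by norm_num
  have hdecay : exp (-(20 * finrank ℝ E * (r - 1))) ≤ 1 / 3 := by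
    have hrate : 20 * finrank ℝ E * (r - 1) = 2 := by
      rw [hr]
      field_simp
      norm_num
    rw [hrate, exp_neg, ← one_div]
    gcongr
    linarith [add_one_le_exp (2 : ℝ)]
  have htotal := setIntegral_add_setIntegral_compl_penalizedGaussian_le hK hρ hball
    (a := 20 * finrank ℝ E) (by positivity) hc hr₁
  set G := ∫ y in K, exp (-(c * ‖y‖ ^ 2))
  set Q := ∫ y in Kᶜ, penalizedGaussian K (20 * finrank ℝ E) (c / r ^ 2) y
  have hG : 0 ≤ G := integral_nonneg fun _ ↦ (exp_pos _).le
  have hQ : 0 ≤ Q := integral_nonneg fun _ ↦ (exp_pos _).le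
  have hcontract : G + Q ≤ 10 / 9 * (G + 1 / 3 * Q) := htotal.trans (by gcongr)
  linarith

end PenalizedGaussian

section GaussianTilt

variable {E : Type*} [NormedAddCommGroup E] [InnerProductSpace ℝ E] {a c δ ρ : ℝ}

theorem exp_neg_mul_sq_norm_le_of_inner_le {s x y : E} (hsx : ⟪s, x⟫ ≤ 1) (ha : 0 ≤ a)
    (hc : 0 ≤ c) :
    exp (-(c * ‖x‖ ^ 2)) ≤
      exp (-(a * (⟪s, y⟫ - 1)) - c * ‖y‖ ^ 2) * exp ⟪a • s + (2 * c) • y, y - x⟫ := by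
  have hexpand : ⟪a • s + (2 * c) • y, y - x⟫ =
      a * (⟪s, y⟫ - ⟪s, x⟫) + c * (‖y‖ ^ 2 - ‖x‖ ^ 2 + ‖y - x‖ ^ 2) := by
    rw [norm_sub_sq_real, inner_add_left, real_inner_smul_left, real_inner_smul_left,
      inner_sub_right, inner_sub_right, real_inner_self_eq_norm_sq]
    ring
  have hstep : 0 ≤ c * ‖y - x‖ ^ 2 := by positivity
  have hsep : 0 ≤ a * (1 - ⟪s, x⟫) := mul_nonneg ha (by linarith)
  rw [← exp_add, hexpand]
  gcongr
  linarith

theorem sq_norm_smul_add_smul_le {s : E} (hs : ‖s‖ ≤ ρ⁻¹) (a b : ℝ) (y : E) :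
    ‖a • s + b • y‖ ^ 2 ≤ 2 * (a ^ 2 / ρ ^ 2 + b ^ 2 * ‖y‖ ^ 2) :=
  calc ‖a • s + b • y‖ ^ 2
    _ ≤ (‖a • s‖ + ‖b • y‖) ^ 2 := by
        gcongr
        exact norm_add_le _ _
    _ ≤ 2 * (‖a • s‖ ^ 2 + ‖b • y‖ ^ 2) := add_sq_le
    _ = 2 * (a ^ 2 * ‖s‖ ^ 2 + b ^ 2 * ‖y‖ ^ 2) := by
        simp only [norm_smul, mul_pow, norm_eq_abs, sq_abs]
    _ ≤ 2 * (a ^ 2 * ρ⁻¹ ^ 2 + b ^ 2 * ‖y‖ ^ 2) := by gcongr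
    _ = 2 * (a ^ 2 / ρ ^ 2 + b ^ 2 * ‖y‖ ^ 2) := by rw [inv_pow, div_eq_mul_inv]

theorem add_mul_sq_div_le_half_add {n : ℝ} (hn : 1 ≤ n) (hρ : 0 < ρ) (hc : 0 ≤ c)
    (hδρ : 1024 * n * δ ^ 2 ≤ ρ ^ 2) (hδc : 2048 * c * n * δ ^ 2 ≤ 1) {t : ℝ} (ht : 0 ≤ t) :
    ((20 * n) ^ 2 / ρ ^ 2 + 4 * c ^ 2 * t) * δ ^ 2 / n ≤
      1 / 2 + (c - c / (1 + 1 / (10 * n)) ^ 2) * t := by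
  have hn₀ : 0 < n := by linarith
  have hpenalty : (20 * n) ^ 2 / ρ ^ 2 * δ ^ 2 / n ≤ 1 / 2 := by
    rw [div_mul_eq_mul_div, div_div, div_le_div_iff₀ (by positivity) two_pos]
    nlinarith
  have hdilation : 1 / (1 + 1 / (10 * n)) ^ 2 ≤ 1 - 1 / (512 * n ^ 2) := by
    rw [one_add_div (by positivity), div_pow, one_div_div, one_sub_div (by positivity),
      div_le_div_iff₀ (by positivity) (by positivity)]
    nlinarith [pow_pos hn₀ 3]
  have hgaussian : 4 * c ^ 2 * δ ^ 2 / n ≤ c * (1 / (512 * n ^ 2)) := by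
    rw [mul_one_div, div_le_div_iff₀ hn₀ (by positivity)]
    nlinarith [mul_le_mul_of_nonneg_left hδc (mul_nonneg hc hn₀.le)]
  have hcoeff : 4 * c ^ 2 * δ ^ 2 / n ≤ c - c / (1 + 1 / (10 * n)) ^ 2 :=
    calc 4 * c ^ 2 * δ ^ 2 / n
      _ ≤ c * (1 - 1 / (1 + 1 / (10 * n)) ^ 2) := hgaussian.trans (by gcongr; linarith)
      _ = c - c / (1 + 1 / (10 * n)) ^ 2 := by ring
  calc ((20 * n) ^ 2 / ρ ^ 2 + 4 * c ^ 2 * t) * δ ^ 2 / n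
    _ = (20 * n) ^ 2 / ρ ^ 2 * δ ^ 2 / n + 4 * c ^ 2 * δ ^ 2 / n * t := by ring
    _ ≤ _ := by gcongr

end GaussianTilt

section LocalConductance

variable {E : Type*} [NormedAddCommGroup E] [InnerProductSpace ℝ E] [FiniteDimensional ℝ E]
  [MeasurableSpace E] [BorelSpace E]

/-- The probability that the step of the ball walk of radius `δ` proposed at `x` stays in `K`.
For `δ < 0` the walk has no step and the value is `0`. -/
noncomputable def localConductance (K : Set E) (δ : ℝ) (x : E) : ℝ :=
  volume.real (K ∩ closedBall x δ) / volume.real (closedBall (0 : E) δ)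

theorem integrable_mul_indicator_closedBall_sub {A : Set E} {f : E → ℝ} (hf : IntegrableOn f A)
    (B : Set E) (δ : ℝ) :
    Integrable (fun p : E × E ↦ f p.2 * (closedBall (0 : E) δ).indicator 1 (p.1 - p.2))
      ((volume.restrict B).prod (volume.restrict A)) := by
  have hball : Integrable ((closedBall (0 : E) δ).indicator (1 : E → ℝ)) :=
    (integrable_indicator_iff measurableSet_closedBall).2
      (integrableOn_const measure_closedBall_lt_top.ne)
  exact (Integrable.convolution_integrand (.mul ℝ ℝ) hf hball).mono_measure
    (Measure.prod_mono Measure.restrict_le_self le_rfl)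

theorem setIntegral_const_mul_indicator_closedBall_sub (B : Set E) (t δ : ℝ) (x : E) :
    ∫ y in B, t * (closedBall (0 : E) δ).indicator 1 (y - x) =
      t * volume.real (B ∩ closedBall x δ) := by
  have hind : (fun y ↦ (closedBall (0 : E) δ).indicator (1 : E → ℝ) (y - x)) =
      (closedBall x δ).indicator 1 := by
    ext y
    simp only [indicator, mem_closedBall, dist_eq_norm, sub_zero, Pi.one_apply]
  rw [integral_const_mul, hind, integral_indicator_one measurableSet_closedBall,
    measureReal_restrict_apply measurableSet_closedBall, inter_comm]

theorem integrableOn_mul_measureReal_inter_closedBall {A : Set E} {f : E → ℝ}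
    (hf : IntegrableOn f A) (B : Set E) (δ : ℝ) :
    IntegrableOn (fun x ↦ f x * volume.real (B ∩ closedBall x δ)) A := by
  simpa only [IntegrableOn, setIntegral_const_mul_indicator_closedBall_sub] using
    (integrable_mul_indicator_closedBall_sub hf B δ).integral_prod_right

theorem setIntegral_mul_indicator_closedBall_sub (A : Set E) (f : E → ℝ) (δ : ℝ) (y : E) :
    ∫ x in A, f x * (closedBall (0 : E) δ).indicator 1 (y - x) =
      ∫ x in A ∩ closedBall y δ, f x := by
  have hind (x : E) : f x * (closedBall (0 : E) δ).indicator 1 (y - x) =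
      (closedBall y δ).indicator f x := by
    simp only [indicator, mem_closedBall, dist_eq_norm, sub_zero, norm_sub_rev x, Pi.one_apply,
      mul_ite, mul_one, mul_zero]
  simp only [hind, setIntegral_indicator measurableSet_closedBall]

theorem integrableOn_setIntegral_inter_closedBall {A : Set E} {f : E → ℝ}
    (hf : IntegrableOn f A) (B : Set E) (δ : ℝ) :
    IntegrableOn (fun y ↦ ∫ x in A ∩ closedBall y δ, f x) B := by
  simpa only [IntegrableOn, setIntegral_mul_indicator_closedBall_sub] using
    (integrable_mul_indicator_closedBall_sub hf B δ).integral_prod_left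

theorem setIntegral_mul_measureReal_inter_closedBall {A : Set E} {f : E → ℝ}
    (hf : IntegrableOn f A) (B : Set E) (δ : ℝ) :
    ∫ x in A, f x * volume.real (B ∩ closedBall x δ) =
      ∫ y in B, ∫ x in A ∩ closedBall y δ, f x := by
  calc ∫ x in A, f x * volume.real (B ∩ closedBall x δ)
    _ = ∫ x in A, ∫ y in B, f x * (closedBall (0 : E) δ).indicator 1 (y - x) := by
        simp only [setIntegral_const_mul_indicator_closedBall_sub]
    _ = ∫ y in B, ∫ x in A, f x * (closedBall (0 : E) δ).indicator 1 (y - x) :=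
        (integral_integral_swap (integrable_mul_indicator_closedBall_sub hf B δ)).symm
    _ = ∫ y in B, ∫ x in A ∩ closedBall y δ, f x := by
        simp only [setIntegral_mul_indicator_closedBall_sub]

variable {K : Set E} {a c δ ρ : ℝ}

theorem setIntegral_inter_closedBall_gaussian_le [Nontrivial E] (hK : Convex ℝ K) (hρ : 0 < ρ)
    (hball : ball 0 ρ ⊆ K) (ha : 0 ≤ a) (hc : 0 ≤ c) (δ : ℝ) (y : E) :
    ∫ x in K ∩ closedBall y δ, exp (-(c * ‖x‖ ^ 2)) ≤
      volume.real (closedBall (0 : E) δ) * exp (-(a * (gauge K y - 1)) - c * ‖y‖ ^ 2 +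
        (a ^ 2 / ρ ^ 2 + 4 * c ^ 2 * ‖y‖ ^ 2) * δ ^ 2 / finrank ℝ E) := by
  obtain ⟨s, hs, hsy, hsK⟩ := exists_inner_eq_gauge hK hρ hball y
  set v : E := a • s + (2 * c) • y
  set t : ℝ := exp (-(a * (gauge K y - 1)) - c * ‖y‖ ^ 2)
  have hpoint (x : E) (hx : x ∈ K ∩ closedBall y δ) :
      exp (-(c * ‖x‖ ^ 2)) ≤ t * exp ⟪v, y - x⟫ := by
    simpa only [hsy] using exp_neg_mul_sq_norm_le_of_inner_le (y := y)
      ((hsK x).trans (gauge_le_one_of_mem hx.1)) ha hc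
  have hintegrable {g : E → ℝ} (hg : Continuous g) : IntegrableOn g (closedBall y δ) :=
    hg.continuousOn.integrableOn_compact (isCompact_closedBall y δ)
  have htilt : IntegrableOn (fun x ↦ t * exp ⟪v, y - x⟫) (closedBall y δ) :=
    hintegrable (by fun_prop)
  have hexponent : ‖v‖ ^ 2 * δ ^ 2 / (2 * finrank ℝ E) ≤
      (a ^ 2 / ρ ^ 2 + 4 * c ^ 2 * ‖y‖ ^ 2) * δ ^ 2 / finrank ℝ E := by
    calc ‖v‖ ^ 2 * δ ^ 2 / (2 * finrank ℝ E)
      _ ≤ 2 * (a ^ 2 / ρ ^ 2 + (2 * c) ^ 2 * ‖y‖ ^ 2) * δ ^ 2 / (2 * finrank ℝ E) := by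
          gcongr
          exact sq_norm_smul_add_smul_le hs a (2 * c) y
      _ = _ := by
          rw [mul_assoc, mul_div_mul_left _ _ two_ne_zero, mul_pow]
          norm_num
  calc ∫ x in K ∩ closedBall y δ, exp (-(c * ‖x‖ ^ 2))
    _ ≤ ∫ x in K ∩ closedBall y δ, t * exp ⟪v, y - x⟫ :=
        setIntegral_mono_on₀ ((hintegrable (by fun_prop)).mono_set inter_subset_right)
          (htilt.mono_set inter_subset_right)
          ((hK.nullMeasurableSet volume).inter measurableSet_closedBall.nullMeasurableSet) hpoint
    _ ≤ ∫ x in closedBall y δ, t * exp ⟪v, y - x⟫ :=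
        setIntegral_mono_set htilt (.of_forall fun _ ↦ by positivity)
          inter_subset_right.eventuallyLE
    _ = t * ∫ x in closedBall y δ, exp ⟪v, y - x⟫ := integral_const_mul _ _
    _ ≤ t * (volume.real (closedBall (0 : E) δ) *
          exp ((a ^ 2 / ρ ^ 2 + 4 * c ^ 2 * ‖y‖ ^ 2) * δ ^ 2 / finrank ℝ E)) := by
        gcongr
        exact (setIntegral_closedBall_exp_inner_sub_le v y δ).trans (by gcongr)
    _ = _ := by
        rw [exp_add]
        ring

theorem setIntegral_inter_closedBall_gaussian_le_penalizedGaussian [Nontrivial E]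
    (hK : Convex ℝ K) (hρ : 0 < ρ) (hball : ball 0 ρ ⊆ K) (hc : 0 ≤ c)
    (hδρ : 1024 * finrank ℝ E * δ ^ 2 ≤ ρ ^ 2) (hδc : 2048 * c * finrank ℝ E * δ ^ 2 ≤ 1) {y : E}
    (hy : y ∉ K) :
    ∫ x in K ∩ closedBall y δ, exp (-(c * ‖x‖ ^ 2)) ≤ 2 * volume.real (closedBall (0 : E) δ) *
      penalizedGaussian K (20 * finrank ℝ E) (c / (1 + 1 / (10 * finrank ℝ E)) ^ 2) y := by
  have hgauge := one_le_gauge_of_ball_subset hK hρ hball hy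
  have hn : (1 : ℝ) ≤ finrank ℝ E := mod_cast Module.finrank_pos (R := ℝ) (M := E)
  have hexp_half : exp (1 / 2 : ℝ) ≤ 2 :=
    (exp_bound_div_one_sub_of_interval (by norm_num) (by norm_num)).trans (by norm_num)
  calc ∫ x in K ∩ closedBall y δ, exp (-(c * ‖x‖ ^ 2))
    _ ≤ volume.real (closedBall (0 : E) δ) *
          exp (-(20 * finrank ℝ E * (gauge K y - 1)) - c * ‖y‖ ^ 2 +
            ((20 * finrank ℝ E) ^ 2 / ρ ^ 2 + 4 * c ^ 2 * ‖y‖ ^ 2) * δ ^ 2 / finrank ℝ E) :=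
        setIntegral_inter_closedBall_gaussian_le hK hρ hball (by positivity) hc δ y
    _ ≤ volume.real (closedBall (0 : E) δ) *
          exp (1 / 2 + (-(20 * finrank ℝ E * (gauge K y - 1)) -
            c / (1 + 1 / (10 * finrank ℝ E)) ^ 2 * ‖y‖ ^ 2)) := by
        refine mul_le_mul_of_nonneg_left (exp_le_exp.2 ?_) measureReal_nonneg
        linarith [add_mul_sq_div_le_half_add hn hρ hc hδρ hδc (sq_nonneg ‖y‖)]
    _ = exp (1 / 2) * volume.real (closedBall (0 : E) δ) *
          penalizedGaussian K (20 * finrank ℝ E) (c / (1 + 1 / (10 * finrank ℝ E)) ^ 2) y := by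
        rw [penalizedGaussian, max_eq_left (by linarith), exp_add]
        ring
    _ ≤ _ := by
        gcongr
        exact (exp_pos _).le

theorem setIntegral_gaussian_mul_measureReal_compl_inter_closedBall_le [Nontrivial E]
    (hK : Convex ℝ K) (hρ : 0 < ρ) (hball : ball 0 ρ ⊆ K) (hc : 0 < c)
    (hδρ : 1024 * finrank ℝ E * δ ^ 2 ≤ ρ ^ 2) (hδc : 2048 * c * finrank ℝ E * δ ^ 2 ≤ 1) :
    ∫ x in K, exp (-(c * ‖x‖ ^ 2)) * volume.real (Kᶜ ∩ closedBall x δ) ≤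
      volume.real (closedBall (0 : E) δ) / 2 * ∫ x in K, exp (-(c * ‖x‖ ^ 2)) := by
  set V := volume.real (closedBall (0 : E) δ)
  set W := penalizedGaussian K (20 * finrank ℝ E) (c / (1 + 1 / (10 * finrank ℝ E)) ^ 2)
  have hgaussian := (integrable_exp_neg_mul_sq_norm (E := E) hc).integrableOn (s := K)
  have hW : Integrable W :=
    integrable_penalizedGaussian hK (Filter.mem_of_superset (ball_mem_nhds 0 hρ) hball)
      (by positivity) (by positivity)
  have hflux : IntegrableOn (fun y ↦ ∫ x in K ∩ closedBall y δ, exp (-(c * ‖x‖ ^ 2))) Kᶜ :=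
    integrableOn_setIntegral_inter_closedBall hgaussian Kᶜ δ
  calc ∫ x in K, exp (-(c * ‖x‖ ^ 2)) * volume.real (Kᶜ ∩ closedBall x δ)
    _ = ∫ y in Kᶜ, ∫ x in K ∩ closedBall y δ, exp (-(c * ‖x‖ ^ 2)) :=
        setIntegral_mul_measureReal_inter_closedBall hgaussian Kᶜ δ
    _ ≤ ∫ y in Kᶜ, 2 * V * W y :=
        setIntegral_mono_on₀ hflux (hW.const_mul _).integrableOn
          (hK.nullMeasurableSet volume).compl fun y hy ↦
            setIntegral_inter_closedBall_gaussian_le_penalizedGaussian hK hρ hball hc.le hδρ hδc hy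
    _ = 2 * V * ∫ y in Kᶜ, W y := integral_const_mul _ _
    _ ≤ 2 * V * (1 / 4 * ∫ x in K, exp (-(c * ‖x‖ ^ 2))) := by
        gcongr
        exact setIntegral_compl_penalizedGaussian_le hK hρ hball hc
    _ = V / 2 * ∫ x in K, exp (-(c * ‖x‖ ^ 2)) := by ring

theorem measureReal_inter_closedBall_eq_sub (hK : NullMeasurableSet K) (δ : ℝ) (x : E) :
    volume.real (K ∩ closedBall x δ) =
      volume.real (closedBall (0 : E) δ) - volume.real (Kᶜ ∩ closedBall x δ) := by
  rw [← Measure.addHaar_real_closedBall_center volume x, inter_comm, inter_comm Kᶜ,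
    ← Set.sdiff_eq, eq_sub_iff_add_eq]
  exact measureReal_inter_add_sdiff₀ hK measure_closedBall_lt_top.ne

theorem half_le_setIntegral_localConductance_mul_gaussian_div [Nontrivial E]
    (hK : Convex ℝ K) (hρ : 0 < ρ) (hball : ball 0 ρ ⊆ K) (hc : 0 < c) (hδ : 0 < δ)
    (hδρ : 1024 * finrank ℝ E * δ ^ 2 ≤ ρ ^ 2) (hδc : 2048 * c * finrank ℝ E * δ ^ 2 ≤ 1) :
    1 / 2 ≤ (∫ x in K, localConductance K δ x * exp (-(c * ‖x‖ ^ 2))) /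
      ∫ x in K, exp (-(c * ‖x‖ ^ 2)) := by
  set V := volume.real (closedBall (0 : E) δ)
  have hV : 0 < V :=
    ENNReal.toReal_pos (measure_closedBall_pos _ _ hδ).ne' measure_closedBall_lt_top.ne
  have hgaussian := (integrable_exp_neg_mul_sq_norm (E := E) hc).integrableOn (s := K)
  have hpos : 0 < ∫ x in K, exp (-(c * ‖x‖ ^ 2)) := by
    have : NeZero (volume.restrict K) := ⟨Measure.restrict_eq_zero.not.2
      ((measure_ball_pos volume 0 hρ).trans_le (measure_mono hball)).ne'⟩
    exact integral_exp_pos hgaussian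
  have hescape := setIntegral_gaussian_mul_measureReal_compl_inter_closedBall_le hK hρ hball hc
    hδρ hδc
  rw [le_div_iff₀ hpos, ← mul_le_mul_iff_right₀ hV]
  calc V * (1 / 2 * ∫ x in K, exp (-(c * ‖x‖ ^ 2)))
    _ ≤ (∫ x in K, exp (-(c * ‖x‖ ^ 2)) * V) -
          ∫ x in K, exp (-(c * ‖x‖ ^ 2)) * volume.real (Kᶜ ∩ closedBall x δ) := by
        rw [integral_mul_const]
        linarith
    _ = ∫ x in K, exp (-(c * ‖x‖ ^ 2)) * volume.real (K ∩ closedBall x δ) := by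
        simp only [measureReal_inter_closedBall_eq_sub (hK.nullMeasurableSet volume), mul_sub]
        exact (integral_sub (hgaussian.mul_const V)
          (integrableOn_mul_measureReal_inter_closedBall hgaussian Kᶜ δ)).symm
    _ = V * ∫ x in K, localConductance K δ x * exp (-(c * ‖x‖ ^ 2)) := by
        rw [← integral_const_mul]
        refine integral_congr_ae (.of_forall fun x ↦ ?_)
        change exp _ * _ = V * (_ / V * exp _)
        field_simp

end LocalConductance

theorem average_local_conductance_gaussian_general {E : Type*} [NormedAddCommGroup E]
    [InnerProductSpace ℝ E] [FiniteDimensional ℝ E] [MeasurableSpace E] [BorelSpace E] {K : Set E}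
    (hK : Convex ℝ K) {ρ σ δ : ℝ} (hball : ball 0 ρ ⊆ K) (hσ : 0 < σ) (hδ : 0 < δ)
    (hδ_le : δ ≤ min ρ σ / (32 * √(finrank ℝ E))) :
    1 / 2 ≤ (∫ x in K, localConductance K δ x * exp (-‖x‖ ^ 2 / (2 * σ ^ 2))) /
      ∫ x in K, exp (-‖x‖ ^ 2 / (2 * σ ^ 2)) := by
  have hn : 0 < √(finrank ℝ E : ℝ) := by
    by_contra! h
    rw [le_antisymm h (sqrt_nonneg _), mul_zero, div_zero] at hδ_le
    linarith
  have : Nontrivial E := Module.finrank_pos_iff.1 (by simpa using hn)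
  have hmin : 32 * √(finrank ℝ E) * δ ≤ min ρ σ := by
    rwa [le_div_iff₀' (by positivity)] at hδ_le
  have hsq {t : ℝ} (ht : min ρ σ ≤ t) : 1024 * finrank ℝ E * δ ^ 2 ≤ t ^ 2 :=
    calc 1024 * finrank ℝ E * δ ^ 2
      _ = (32 * √(finrank ℝ E) * δ) ^ 2 := by
          rw [mul_pow, mul_pow, sq_sqrt (Nat.cast_nonneg _)]
          norm_num
      _ ≤ t ^ 2 := by
          gcongr
          exact hmin.trans ht
  have hρ : 0 < ρ := (by positivity : 0 < 32 * √(finrank ℝ E) * δ).trans_le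
    (hmin.trans (min_le_left ρ σ))
  have hδσ : 2048 * (1 / (2 * σ ^ 2)) * finrank ℝ E * δ ^ 2 ≤ 1 := by
    have := hsq (min_le_right ρ σ)
    field_simp
    linarith
  have hexp (x : E) : -‖x‖ ^ 2 / (2 * σ ^ 2) = -(1 / (2 * σ ^ 2) * ‖x‖ ^ 2) := by ring
  simp only [hexp]
  exact half_le_setIntegral_localConductance_mul_gaussian_div hK hρ hball (by positivity) hδ
    (hsq (min_le_left ρ σ)) hδσ

/-- Corollary 5.7 of the paper: for `n ≥ 2`, `0 < σ ≤ 1`, a convex body `K` containing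
the unit ball, and step size `0 < δ ≤ σ/(4096√n)`, the average local conductance of the
ball walk for the density proportional to `e^{-‖x‖²/(2σ²)}` on `K` is at least `1/2`. -/
theorem average_local_conductance_gaussian
    (n : ℕ) (hn : 2 ≤ n) (σ : ℝ) (hσ0 : 0 < σ) (hσ1 : σ ≤ 1)
    (K : Set (EuclideanSpace ℝ (Fin n)))
    (hKconv : Convex ℝ K) (hKcomp : IsCompact K)
    (hKball : closedBall (0 : EuclideanSpace ℝ (Fin n)) 1 ⊆ K)
    (δ : ℝ) (hδ : 0 < δ) (hδσ : δ ≤ σ / (4096 * Real.sqrt n))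
    (ℓ : EuclideanSpace ℝ (Fin n) → ℝ)
    (hℓ : ∀ x, ℓ x = (volume (K ∩ closedBall x δ)).toReal /
      (volume (closedBall (0 : EuclideanSpace ℝ (Fin n)) δ)).toReal) :
    (1 : ℝ) / 2 ≤ (∫ x in K, ℓ x * Real.exp (-‖x‖^2 / (2 * σ^2))) /
      (∫ x in K, Real.exp (-‖x‖^2 / (2 * σ^2))) := by
  obtain rfl : ℓ = localConductance K δ := funext hℓ
  refine average_local_conductance_gaussian_general hKconv (ball_subset_closedBall.trans hKball)
    hσ0 hδ (hδσ.trans ?_)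
  rw [min_eq_right hσ1, finrank_euclideanSpace_fin]
  gcongr
  norm_num
end

section
/- Let K ⊆ ℝⁿ be a convex body and let f : ℝⁿ → ℝ≥0 be a logconcave function. Define Z(a) = ∫_K f(ax) dx for a > 0. Then the function a ↦ aⁿ Z(a) is logconcave on (0, ∞). -/
open MeasureTheory Real Set Metric

/-!
The map `(a, x) ↦ 1_{aK}(x) f(x)` is logconcave on `(0, ∞) × E`, because the points with
`x ∈ aK` form a convex cone over `K`. Rescaling shows that `aⁿ Z(a) = ∫ 1_{aK}(x) f(x) dx` is a
marginal of this map, and marginals of logconcave functions are logconcave: this is Prékopa's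
theorem, a direct consequence of the Prékopa–Leindler inequality.

The latter is proved first on `ℝ`. There, for functions with supremum `1`, the superlevel sets of
`F` and `G` are nonempty at every height below `1`, so the one-dimensional Brunn–Minkowski
inequality can be integrated over all heights. Tonelli's theorem then gives it on products.
-/

open scoped ENNReal Pointwise

section RealLine

theorem volume_add_volume_le_volume_add_of_isCompact {A B : Set ℝ} (hA : IsCompact A)
    (hB : IsCompact B) (hA₀ : A.Nonempty) (hB₀ : B.Nonempty) :
    volume A + volume B ≤ volume (A + B) := by
  obtain ⟨M, hM, hAM⟩ := hA.exists_isGreatest hA₀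
  obtain ⟨m, hm, hBm⟩ := hB.exists_isLeast hB₀
  -- The translates `A + m` and `M + B` meet only at `M + m`.
  have hdisj : AEDisjoint volume ((· + m) '' A) ((M + ·) '' B) := by
    refine measure_mono_null (t := {M + m}) ?_ (by simp)
    rintro _ ⟨⟨x, hx, rfl⟩, y, hy, hxy⟩
    have hxM := hAM hx
    have hmy := hBm hy
    simp only [mem_singleton_iff] at hxy ⊢
    linarith
  calc volume A + volume B = volume ((· + m) '' A) + volume ((M + ·) '' B) := by
        rw [image_add_right, measure_preimage_add_right, image_add_left, measure_preimage_add]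
    _ = volume ((· + m) '' A ∪ (M + ·) '' B) :=
        (measure_union₀ (hB.image (by fun_prop)).measurableSet.nullMeasurableSet hdisj).symm
    _ ≤ volume (A + B) := by
        refine measure_mono (union_subset ?_ ?_)
        · exact image_subset_iff.2 fun x hx ↦ add_mem_add hx hm
        · exact image_subset_iff.2 fun y hy ↦ add_mem_add hM hy

theorem volume_add_volume_le_volume_add {A B : Set ℝ} (hA : MeasurableSet A)
    (hB : MeasurableSet B) (hA₀ : A.Nonempty) (hB₀ : B.Nonempty) :
    volume A + volume B ≤ volume (A + B) := by
  obtain ⟨x, hx⟩ := hA₀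
  obtain ⟨y, hy⟩ := hB₀
  rw [hA.measure_eq_iSup_isCompact, hB.measure_eq_iSup_isCompact]
  simp only [iSup_and']
  refine ENNReal.biSup_add_biSup_le' ⟨∅, by simp⟩ ⟨∅, by simp⟩ ?_
  rintro K ⟨hKA, hK⟩ L ⟨hLB, hL⟩
  calc volume K + volume L ≤ volume (insert x K) + volume (insert y L) := by
        gcongr <;> exact subset_insert _ _
    _ ≤ volume (insert x K + insert y L) :=
        volume_add_volume_le_volume_add_of_isCompact (hK.insert x) (hL.insert y)
          (insert_nonempty _ _) (insert_nonempty _ _)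
    _ ≤ volume (A + B) :=
        measure_mono (add_subset_add (insert_subset hx hKA) (insert_subset hy hLB))

theorem ofReal_mul_volume_add_le_volume_smul_add_smul {A B : Set ℝ} (hA : MeasurableSet A)
    (hB : MeasurableSet B) (hA₀ : A.Nonempty) (hB₀ : B.Nonempty) {a b : ℝ} (ha : 0 < a)
    (hb : 0 < b) :
    ENNReal.ofReal a * volume A + ENNReal.ofReal b * volume B ≤ volume (a • A + b • B) := by
  have volume_smul {c : ℝ} (hc : 0 < c) (S : Set ℝ) :
      ENNReal.ofReal c * volume S = volume (c • S) := by
    simp [Measure.addHaar_smul, abs_of_pos hc]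
  rw [volume_smul ha, volume_smul hb]
  exact volume_add_volume_le_volume_add (hA.const_smul_of_ne_zero ha.ne')
    (hB.const_smul_of_ne_zero hb.ne') hA₀.smul_set hB₀.smul_set

end RealLine

section ENNReal

theorem rpow_mul_rpow_le_ofReal_mul_add (x y : ℝ≥0∞) {a b : ℝ} (ha : 0 < a) (hb : 0 < b)
    (hab : a + b = 1) :
    x ^ a * y ^ b ≤ ENNReal.ofReal a * x + ENNReal.ofReal b * y := by
  have h := ENNReal.young_inequality (x ^ a) (y ^ b) (Real.HolderConjugate.inv_inv ha hb hab)
  rwa [ENNReal.rpow_rpow_inv ha.ne', ENNReal.rpow_rpow_inv hb.ne', ENNReal.ofReal_inv_of_pos ha,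
    ENNReal.ofReal_inv_of_pos hb, div_eq_mul_inv, div_eq_mul_inv, inv_inv, inv_inv, mul_comm x,
    mul_comm y] at h

theorem rpow_mul_rpow_self (x : ℝ≥0∞) {a b : ℝ} (ha : 0 ≤ a) (hb : 0 ≤ b) (hab : a + b = 1) :
    x ^ a * x ^ b = x := by
  rw [← ENNReal.rpow_add_of_nonneg _ _ ha hb, hab, ENNReal.rpow_one]

variable {α : Type*} [MeasurableSpace α] {μ : Measure α}

theorem lintegral_eq_lintegral_measure_ofReal_lt [SFinite μ] {f : α → ℝ≥0∞} (hf : Measurable f) :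
    ∫⁻ x, f x ∂μ = ∫⁻ t in Ioi (0 : ℝ), μ {x | ENNReal.ofReal t < f x} := by
  set S : Set (α × ℝ) := {p | ENNReal.ofReal p.2 < f p.1}
  have hS : MeasurableSet S := measurableSet_lt (by fun_prop) (by fun_prop)
  have volume_Ioi_inter (c : ℝ≥0∞) :
      volume ({t : ℝ | ENNReal.ofReal t < c} ∩ Ioi 0) = c := by
    induction c with
    | top => simp
    | coe c =>
      have : {t : ℝ | ENNReal.ofReal t < c} ∩ Ioi 0 = Ioo 0 (c : ℝ) := by
        ext t
        simp +contextual [ENNReal.ofReal_lt_iff_lt_toReal, and_comm, le_of_lt]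
      simp [this]
  calc ∫⁻ x, f x ∂μ = ∫⁻ x, volume.restrict (Ioi (0 : ℝ)) (Prod.mk x ⁻¹' S) ∂μ := by
        refine lintegral_congr fun x ↦ ?_
        rw [Measure.restrict_apply (measurable_prodMk_left hS)]
        exact (volume_Ioi_inter (f x)).symm
    _ = (μ.prod (volume.restrict (Ioi 0))) S := (Measure.prod_apply hS).symm
    _ = ∫⁻ t in Ioi (0 : ℝ), μ {x | ENNReal.ofReal t < f x} := Measure.prod_apply_symm hS

theorem tendsto_lintegral_min_natCast {f : α → ℝ≥0∞} (hf : AEMeasurable f μ) :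
    Filter.Tendsto (fun m : ℕ ↦ ∫⁻ x, min (f x) m ∂μ) Filter.atTop (nhds (∫⁻ x, f x ∂μ)) := by
  refine lintegral_tendsto_of_tendsto_of_monotone
    (fun m ↦ hf.min aemeasurable_const) (ae_of_all _ fun x i j hij ↦ ?_)
    (ae_of_all _ fun x ↦ ?_)
  · dsimp only
    gcongr
  · simpa using tendsto_const_nhds.min ENNReal.tendsto_nat_nhds_top

theorem exists_measurable_ge_ae_eq {f : α → ℝ≥0∞} (hf : AEMeasurable f μ) :
    ∃ g, Measurable g ∧ f ≤ g ∧ g =ᵐ[μ] f := by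
  obtain ⟨N, hsub, hN, hN₀⟩ := exists_measurable_superset_of_null hf.ae_eq_mk
  refine ⟨hf.mk f + N.indicator ⊤, hf.measurable_mk.add (measurable_const.indicator hN),
    fun x ↦ ?_, ?_⟩
  · by_cases hx : x ∈ N
    · simp [hx]
    · have hfx : f x = hf.mk f x := of_not_not fun hne ↦ hx (hsub hne)
      simp [hx, hfx]
  · filter_upwards [measure_eq_zero_iff_ae_notMem.1 hN₀, hf.ae_eq_mk] with x hx hfx
    simp [hx, hfx]

end ENNReal

section PrekopaLeindler

variable {E F : Type*} [AddCommGroup E] [Module ℝ E] [MeasurableSpace E]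
  [AddCommGroup F] [Module ℝ F] [MeasurableSpace F]

/-- The Prékopa–Leindler inequality for integration against `μ`, with measurability assumed of all
three functions so that it passes to slices in products; see
`SatisfiesPrekopaLeindler.lintegral_le` for a form with weaker assumptions. -/
def SatisfiesPrekopaLeindler (μ : Measure E) : Prop :=
  ∀ ⦃f g h : E → ℝ≥0∞⦄, Measurable f → Measurable g → Measurable h →
    ∀ ⦃a b : ℝ⦄, 0 < a → 0 < b → a + b = 1 →
      (∀ x y, f x ^ a * g y ^ b ≤ h (a • x + b • y)) →
        (∫⁻ x, f x ∂μ) ^ a * (∫⁻ x, g x ∂μ) ^ b ≤ ∫⁻ x, h x ∂μ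

section Real

variable {f g h : ℝ → ℝ≥0∞} {a b : ℝ}

theorem ofReal_mul_lintegral_add_le_of_iSup_eq_one (hf : Measurable f) (hg : Measurable g)
    (hh : Measurable h) (hf₁ : ⨆ x, f x = 1) (hg₁ : ⨆ x, g x = 1) (ha : 0 < a) (hb : 0 < b)
    (hab : a + b = 1) (hfgh : ∀ x y, f x ^ a * g y ^ b ≤ h (a • x + b • y)) :
    ENNReal.ofReal a * (∫⁻ x, f x) + ENNReal.ofReal b * ∫⁻ x, g x ≤ ∫⁻ x, h x := by
  have measurable_superlevel (k : ℝ → ℝ≥0∞) :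
      Measurable fun t : ℝ ↦ volume {x | ENNReal.ofReal t < k x} :=
    Antitone.measurable fun s t hst ↦
      measure_mono fun x (hx : _ < k x) ↦ (ENNReal.ofReal_le_ofReal hst).trans_lt hx
  simp only [lintegral_eq_lintegral_measure_ofReal_lt hf,
    lintegral_eq_lintegral_measure_ofReal_lt hg, lintegral_eq_lintegral_measure_ofReal_lt hh]
  rw [← lintegral_const_mul _ (measurable_superlevel f),
    ← lintegral_const_mul _ (measurable_superlevel g),
    ← lintegral_add_left ((measurable_superlevel f).const_mul _)]
  refine lintegral_mono fun t ↦ ?_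
  set u := ENNReal.ofReal t
  rcases lt_or_ge u 1 with hu | hu
  · have superlevel_nonempty {k : ℝ → ℝ≥0∞} (hk : ⨆ x, k x = 1) : {x | u < k x}.Nonempty := by
      rwa [← hk, lt_iSup_iff] at hu
    have superlevel_subset : a • {x | u < f x} + b • {x | u < g x} ⊆ {x | u < h x} := by
      rintro _ ⟨_, ⟨x, hx, rfl⟩, _, ⟨y, hy, rfl⟩, rfl⟩
      calc u = u ^ a * u ^ b := (rpow_mul_rpow_self u ha.le hb.le hab).symm
        _ < f x ^ a * g y ^ b :=
          ENNReal.mul_lt_mul (ENNReal.rpow_lt_rpow hx ha) (ENNReal.rpow_lt_rpow hy hb)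
        _ ≤ h (a • x + b • y) := hfgh x y
    exact (ofReal_mul_volume_add_le_volume_smul_add_smul (measurableSet_lt measurable_const hf)
      (measurableSet_lt measurable_const hg) (superlevel_nonempty hf₁) (superlevel_nonempty hg₁)
      ha hb).trans (measure_mono superlevel_subset)
  · have superlevel_eq_empty {k : ℝ → ℝ≥0∞} (hk : ⨆ x, k x = 1) : {x | u < k x} = ∅ :=
      eq_empty_of_forall_notMem fun x hx ↦ (hk ▸ hu.trans_lt hx).not_ge (le_iSup k x)
    simp [superlevel_eq_empty hf₁, superlevel_eq_empty hg₁]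

theorem lintegral_rpow_mul_lintegral_rpow_le_of_iSup_ne_top (hf : Measurable f)
    (hg : Measurable g) (hh : Measurable h) (hf' : ⨆ x, f x ≠ ∞) (hg' : ⨆ x, g x ≠ ∞)
    (ha : 0 < a) (hb : 0 < b) (hab : a + b = 1)
    (hfgh : ∀ x y, f x ^ a * g y ^ b ≤ h (a • x + b • y)) :
    (∫⁻ x, f x) ^ a * (∫⁻ x, g x) ^ b ≤ ∫⁻ x, h x := by
  rcases eq_or_ne (⨆ x, f x) 0 with hf₀ | hf₀
  · simp_all
  rcases eq_or_ne (⨆ x, g x) 0 with hg₀ | hg₀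
  · simp_all
  set M := ⨆ x, f x
  set N := ⨆ x, g x
  set c := M ^ a * N ^ b
  have hc₀ : c ≠ 0 := mul_ne_zero (ENNReal.rpow_pos (pos_iff_ne_zero.2 hf₀) hf').ne'
    (ENNReal.rpow_pos (pos_iff_ne_zero.2 hg₀) hg').ne'
  have hc : c ≠ ∞ := ENNReal.mul_ne_top (ENNReal.rpow_ne_top_of_nonneg ha.le hf')
    (ENNReal.rpow_ne_top_of_nonneg hb.le hg')
  have inv_mul_rpow (u v : ℝ≥0∞) : (M⁻¹ * u) ^ a * (N⁻¹ * v) ^ b = c⁻¹ * (u ^ a * v ^ b) := by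
    rw [ENNReal.mul_rpow_of_nonneg _ _ ha.le, ENNReal.mul_rpow_of_nonneg _ _ hb.le,
      ENNReal.inv_rpow, ENNReal.inv_rpow, mul_mul_mul_comm, ← ENNReal.mul_inv]
    · simp [hf₀, hf']
    · simp [hf₀, hf']
  have normalized := ofReal_mul_lintegral_add_le_of_iSup_eq_one (hf.const_mul M⁻¹)
    (hg.const_mul N⁻¹) (hh.const_mul c⁻¹)
    (by rw [← ENNReal.mul_iSup, ENNReal.inv_mul_cancel hf₀ hf'])
    (by rw [← ENNReal.mul_iSup, ENNReal.inv_mul_cancel hg₀ hg']) ha hb hab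
    fun x y ↦ by rw [inv_mul_rpow]; gcongr; exact hfgh x y
  rw [lintegral_const_mul _ hf, lintegral_const_mul _ hg, lintegral_const_mul _ hh] at normalized
  have scaled := (rpow_mul_rpow_le_ofReal_mul_add _ _ ha hb hab).trans normalized
  rwa [inv_mul_rpow, ENNReal.mul_le_mul_iff_right (ENNReal.inv_ne_zero.2 hc)
    (ENNReal.inv_ne_top.2 hc₀)] at scaled

theorem satisfiesPrekopaLeindler_volume_real :
    SatisfiesPrekopaLeindler (volume : Measure ℝ) := by
  intro f g h hf hg hh a b ha hb hab hfgh
  rcases eq_or_ne (∫⁻ x, f x) 0 with hf₀ | hf₀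
  · simp [hf₀, ha]
  rcases eq_or_ne (∫⁻ x, g x) 0 with hg₀ | hg₀
  · simp [hg₀, hb]
  have iSup_min_ne_top (k : ℝ → ℝ≥0∞) (m : ℕ) : ⨆ x, min (k x) m ≠ ∞ :=
    ne_top_of_le_ne_top (ENNReal.natCast_ne_top m) (iSup_le fun _ ↦ min_le_right _ _)
  have truncated (m : ℕ) :
      (∫⁻ x, min (f x) m) ^ a * (∫⁻ x, min (g x) m) ^ b ≤ ∫⁻ x, h x :=
    lintegral_rpow_mul_lintegral_rpow_le_of_iSup_ne_top (hf.min measurable_const)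
      (hg.min measurable_const) hh (iSup_min_ne_top f m) (iSup_min_ne_top g m) ha hb hab
      fun x y ↦ le_trans (by gcongr <;> exact min_le_left _ _) (hfgh x y)
  have hfa := (tendsto_lintegral_min_natCast (μ := volume) hf.aemeasurable).ennrpow_const a
  have hgb := (tendsto_lintegral_min_natCast (μ := volume) hg.aemeasurable).ennrpow_const b
  refine le_of_tendsto' (ENNReal.Tendsto.mul hfa (.inl ?_) hgb (.inl ?_)) truncated
  · simp [ENNReal.rpow_eq_zero_iff, hf₀, ha.le]
  · simp [ENNReal.rpow_eq_zero_iff, hg₀, hb.le]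

end Real

theorem satisfiesPrekopaLeindler_dirac (x : E) : SatisfiesPrekopaLeindler (Measure.dirac x) := by
  intro f g h hf hg hh a b _ _ hab hfgh
  simpa [lintegral_dirac' x, hf, hg, hh, ← add_smul, hab] using hfgh x x

namespace SatisfiesPrekopaLeindler

variable {μ : Measure E} {ν : Measure F}

theorem map (hμ : SatisfiesPrekopaLeindler μ) (L : E →ₗ[ℝ] F) (hL : Measurable L) :
    SatisfiesPrekopaLeindler (μ.map L) := by
  intro f g h hf hg hh a b ha hb hab hfgh
  simp only [lintegral_map, hf, hg, hh, hL]
  exact hμ (hf.comp hL) (hg.comp hL) (hh.comp hL) ha hb hab fun x y ↦ by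
    simpa using hfgh (L x) (L y)

theorem const_smul (hμ : SatisfiesPrekopaLeindler μ) (c : ℝ≥0∞) :
    SatisfiesPrekopaLeindler (c • μ) := by
  intro f g h hf hg hh a b ha hb hab hfgh
  simp only [lintegral_smul_measure, smul_eq_mul, ENNReal.mul_rpow_of_nonneg, ha.le, hb.le]
  rw [mul_mul_mul_comm, rpow_mul_rpow_self c ha.le hb.le hab]
  gcongr
  exact hμ hf hg hh ha hb hab hfgh

theorem prod [SFinite ν] (hμ : SatisfiesPrekopaLeindler μ) (hν : SatisfiesPrekopaLeindler ν) :
    SatisfiesPrekopaLeindler (μ.prod ν) := by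
  intro f g h hf hg hh a b ha hb hab hfgh
  rw [lintegral_prod _ hf.aemeasurable, lintegral_prod _ hg.aemeasurable,
    lintegral_prod _ hh.aemeasurable]
  refine hμ hf.lintegral_prod_right' hg.lintegral_prod_right' hh.lintegral_prod_right' ha hb hab
    fun x₁ y₁ ↦ ?_
  exact hν (hf.comp measurable_prodMk_left) (hg.comp measurable_prodMk_left)
    (hh.comp measurable_prodMk_left) ha hb hab fun x₂ y₂ ↦ hfgh (x₁, x₂) (y₁, y₂)

theorem lintegral_le (hμ : SatisfiesPrekopaLeindler μ) {f g h : E → ℝ≥0∞}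
    (hh : AEMeasurable h μ) {a b : ℝ} (ha : 0 < a) (hb : 0 < b) (hab : a + b = 1)
    (hfgh : ∀ x y, f x ^ a * g y ^ b ≤ h (a • x + b • y)) :
    (∫⁻ x, f x ∂μ) ^ a * (∫⁻ x, g x ∂μ) ^ b ≤ ∫⁻ x, h x ∂μ := by
  obtain ⟨f', hf', hf'f, hf_eq⟩ := exists_measurable_le_lintegral_eq μ f
  obtain ⟨g', hg', hg'g, hg_eq⟩ := exists_measurable_le_lintegral_eq μ g
  obtain ⟨h', hh', hhh', hh_eq⟩ := exists_measurable_ge_ae_eq hh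
  rw [hf_eq, hg_eq, ← lintegral_congr_ae hh_eq]
  refine hμ hf' hg' hh' ha hb hab fun x y ↦ ?_
  calc f' x ^ a * g' y ^ b ≤ f x ^ a * g y ^ b := by gcongr <;> apply_assumption
    _ ≤ h (a • x + b • y) := hfgh x y
    _ ≤ h' (a • x + b • y) := hhh' _

theorem integral_le (hμ : SatisfiesPrekopaLeindler μ) {f g h : E → ℝ}
    (hf : Integrable f μ) (hg : Integrable g μ) (hh : Integrable h μ)
    (hf₀ : 0 ≤ f) (hg₀ : 0 ≤ g) {a b : ℝ} (ha : 0 < a) (hb : 0 < b) (hab : a + b = 1)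
    (hfgh : ∀ x y, f x ^ a * g y ^ b ≤ h (a • x + b • y)) :
    (∫ x, f x ∂μ) ^ a * (∫ x, g x ∂μ) ^ b ≤ ∫ x, h x ∂μ := by
  have hh₀ : 0 ≤ h := fun x ↦ by
    have := hfgh x x
    rw [← add_smul, hab, one_smul] at this
    exact (mul_nonneg (rpow_nonneg (hf₀ x) a) (rpow_nonneg (hg₀ x) b)).trans this
  have hf_int : 0 ≤ ∫ x, f x ∂μ := integral_nonneg hf₀
  have hg_int : 0 ≤ ∫ x, g x ∂μ := integral_nonneg hg₀
  rw [← ENNReal.ofReal_le_ofReal_iff (integral_nonneg hh₀), ENNReal.ofReal_mul (by positivity),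
    ← ENNReal.ofReal_rpow_of_nonneg hf_int ha.le, ← ENNReal.ofReal_rpow_of_nonneg hg_int hb.le,
    ofReal_integral_eq_lintegral_ofReal hf (ae_of_all _ hf₀),
    ofReal_integral_eq_lintegral_ofReal hg (ae_of_all _ hg₀),
    ofReal_integral_eq_lintegral_ofReal hh (ae_of_all _ hh₀)]
  refine hμ.lintegral_le hh.aemeasurable.ennreal_ofReal ha hb hab fun x y ↦ ?_
  rw [ENNReal.ofReal_rpow_of_nonneg (hf₀ x) ha.le, ENNReal.ofReal_rpow_of_nonneg (hg₀ y) hb.le,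
    ← ENNReal.ofReal_mul (rpow_nonneg (hf₀ x) a)]
  exact ENNReal.ofReal_le_ofReal (hfgh x y)

end SatisfiesPrekopaLeindler

theorem satisfiesPrekopaLeindler_volume_pi (n : ℕ) :
    SatisfiesPrekopaLeindler (volume : Measure (Fin n → ℝ)) := by
  induction n with
  | zero =>
    rw [volume_pi, Measure.pi_of_empty _ 0]
    exact satisfiesPrekopaLeindler_dirac 0
  | succ n ih =>
    let e := (MeasurableEquiv.piFinSuccAbove (fun _ : Fin (n + 1) ↦ ℝ) 0).symm
    let L := (Fin.consLinearEquiv ℝ fun _ : Fin (n + 1) ↦ ℝ).toLinearMap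
    have hL : ⇑L = e := by
      ext x i
      cases i using Fin.cases <;> simp [L, e, MeasurableEquiv.piFinSuccAbove]
    have he : MeasurePreserving e :=
      (volume_preserving_piFinSuccAbove (fun _ : Fin (n + 1) ↦ ℝ) 0).symm
    rw [← he.map_eq, ← hL]
    exact (satisfiesPrekopaLeindler_volume_real.prod ih).map L (hL ▸ e.measurable)

theorem satisfiesPrekopaLeindler_of_isAddHaarMeasure {E : Type*} [NormedAddCommGroup E]
    [NormedSpace ℝ E] [FiniteDimensional ℝ E] [MeasurableSpace E] [BorelSpace E] (μ : Measure E)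
    [μ.IsAddHaarMeasure] : SatisfiesPrekopaLeindler μ := by
  let L := (Module.finBasis ℝ E).equivFun.symm.toContinuousLinearEquiv
  have : ((volume : Measure (Fin (Module.finrank ℝ E) → ℝ)).map L).IsAddHaarMeasure :=
    L.isAddHaarMeasure_map volume
  rw [Measure.isAddLeftInvariant_eq_smul μ (volume.map L)]
  exact ((satisfiesPrekopaLeindler_volume_pi _).map L.toLinearMap
    L.continuous.measurable).const_smul _

end PrekopaLeindler

/-- `f` is logconcave on the set `s`, which is required to be convex. The values of `f` outside `s`
are irrelevant; a function on the whole space with convex support corresponds to `s = univ`. -/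
structure LogConcaveOn {E : Type*} [AddCommGroup E] [Module ℝ E] (s : Set E) (f : E → ℝ) :
    Prop where
  convex : Convex ℝ s
  nonneg : ∀ ⦃x⦄, x ∈ s → 0 ≤ f x
  rpow_mul_rpow_le : ∀ ⦃x⦄, x ∈ s → ∀ ⦃y⦄, y ∈ s → ∀ ⦃a b : ℝ⦄, 0 ≤ a → 0 ≤ b → a + b = 1 →
    f x ^ a * f y ^ b ≤ f (a • x + b • y)

namespace LogConcaveOn

section Algebra

variable {E F : Type*} [AddCommGroup E] [Module ℝ E] [AddCommGroup F] [Module ℝ F]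
  {s t : Set E} {f g : E → ℝ}

theorem of_forall_pos (hs : Convex ℝ s) (hf₀ : ∀ ⦃x⦄, x ∈ s → 0 ≤ f x)
    (hf : ∀ ⦃x⦄, x ∈ s → ∀ ⦃y⦄, y ∈ s → ∀ ⦃a b : ℝ⦄, 0 < a → 0 < b → a + b = 1 →
      f x ^ a * f y ^ b ≤ f (a • x + b • y)) :
    LogConcaveOn s f := by
  refine ⟨hs, hf₀, fun x hx y hy a b ha hb hab ↦ ?_⟩
  rcases ha.eq_or_lt with rfl | ha
  · obtain rfl : b = 1 := by linarith
    simp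
  rcases hb.eq_or_lt with rfl | hb
  · obtain rfl : a = 1 := by linarith
    simp
  exact hf hx hy ha hb hab

theorem congr (hf : LogConcaveOn s f) (hfg : EqOn f g s) : LogConcaveOn s g where
  convex := hf.convex
  nonneg x hx := hfg hx ▸ hf.nonneg hx
  rpow_mul_rpow_le x hx y hy a b ha hb hab := by
    rw [← hfg hx, ← hfg hy, ← hfg (hf.convex hx hy ha hb hab)]
    exact hf.rpow_mul_rpow_le hx hy ha hb hab

theorem subset (hf : LogConcaveOn t f) (hst : s ⊆ t) (hs : Convex ℝ s) : LogConcaveOn s f :=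
  ⟨hs, fun _ hx ↦ hf.nonneg (hst hx),
    fun _ hx _ hy ↦ hf.rpow_mul_rpow_le (hst hx) (hst hy)⟩

theorem comp_linearMap (hf : LogConcaveOn s f) (L : F →ₗ[ℝ] E) :
    LogConcaveOn (L ⁻¹' s) (f ∘ L) where
  convex := hf.convex.linear_preimage L
  nonneg _ hx := hf.nonneg hx
  rpow_mul_rpow_le x hx y hy a b ha hb hab := by
    simpa using hf.rpow_mul_rpow_le hx hy ha hb hab

theorem indicator (hf : LogConcaveOn s f) (ht : Convex ℝ (s ∩ t)) :
    LogConcaveOn s (t.indicator f) := by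
  refine of_forall_pos hf.convex (fun x hx ↦ indicator_apply_nonneg fun _ ↦ hf.nonneg hx)
    fun x hx y hy a b ha hb hab ↦ ?_
  have nonneg_combination : 0 ≤ t.indicator f (a • x + b • y) :=
    indicator_apply_nonneg fun _ ↦ hf.nonneg (hf.convex hx hy ha.le hb.le hab)
  by_cases hxt : x ∈ t
  · by_cases hyt : y ∈ t
    · have hxyt := (ht ⟨hx, hxt⟩ ⟨hy, hyt⟩ ha.le hb.le hab).2
      simpa [hxt, hyt, hxyt] using hf.rpow_mul_rpow_le hx hy ha.le hb.le hab
    · simpa [hyt, zero_rpow hb.ne'] using nonneg_combination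
  · simpa [hxt, zero_rpow ha.ne'] using nonneg_combination

theorem convex_ge (hf : LogConcaveOn s f) (c : ℝ) : Convex ℝ {x ∈ s | c ≤ f x} := by
  rintro x ⟨hx, hcx⟩ y ⟨hy, hcy⟩ a b ha hb hab
  have hxy := hf.convex hx hy ha hb hab
  refine ⟨hxy, ?_⟩
  rcases le_or_gt c 0 with hc | hc
  · exact hc.trans (hf.nonneg hxy)
  have hfx := hf.nonneg hx
  calc c = c ^ a * c ^ b := by rw [← rpow_add hc, hab, rpow_one]
    _ ≤ f x ^ a * f y ^ b := by gcongr
    _ ≤ f (a • x + b • y) := hf.rpow_mul_rpow_le hx hy ha hb hab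

/-- **Prékopa's theorem.** -/
theorem integral_prod_right {s : Set F} {g : F × E → ℝ} [MeasurableSpace E] {μ : Measure E}
    (hμ : SatisfiesPrekopaLeindler μ) (hg : LogConcaveOn (s ×ˢ univ) g)
    (hint : ∀ x ∈ s, Integrable (fun y ↦ g (x, y)) μ) :
    LogConcaveOn s fun x ↦ ∫ y, g (x, y) ∂μ := by
  have hs : Convex ℝ s := by
    have := hg.convex.linear_image (LinearMap.fst ℝ F E)
    rwa [LinearMap.coe_fst, fst_image_prod s univ_nonempty] at this
  have slice_nonneg {x : F} (hx : x ∈ s) : 0 ≤ fun y ↦ g (x, y) :=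
    fun y ↦ hg.nonneg ⟨hx, mem_univ y⟩
  refine of_forall_pos hs (fun x hx ↦ integral_nonneg (slice_nonneg hx))
    fun x hx y hy a b ha hb hab ↦ ?_
  exact hμ.integral_le (hint x hx) (hint y hy) (hint _ (hs hx hy ha.le hb.le hab))
    (slice_nonneg hx) (slice_nonneg hy) ha hb hab fun u v ↦
      hg.rpow_mul_rpow_le ⟨hx, mem_univ u⟩ ⟨hy, mem_univ v⟩ ha.le hb.le hab

end Algebra

section Normed

variable {E : Type*} [NormedAddCommGroup E] [NormedSpace ℝ E] {f : E → ℝ}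

-- A point `y` of `B` and a point `z` near `x` with `f z ≥ c` have `x` between them in a proportion
-- that depends only on the size of `B`, so logconcavity at `x` bounds `f y`.
theorem bddAbove_image_of_isBounded (hf : LogConcaveOn univ f) {c : ℝ} (hc : 0 < c)
    (hfc : (interior {x | c ≤ f x}).Nonempty) {B : Set E} (hB : Bornology.IsBounded B) :
    BddAbove (f '' B) := by
  obtain ⟨x, hx⟩ := hfc
  obtain ⟨r, hr, hball⟩ := Metric.isOpen_iff.1 isOpen_interior x hx
  obtain ⟨R, hR, hBR⟩ := hB.subset_ball_lt 0 x
  have : 0 < R + r := by positivity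
  set a := r / (R + r)
  set b := R / (R + r)
  have ha : 0 < a := by positivity
  have hb : 0 < b := by positivity
  have hab : a + b = 1 := by simp only [a, b]; field_simp; ring
  refine ⟨(f x / c ^ b) ^ a⁻¹, forall_mem_image.2 fun y hy ↦ ?_⟩
  set z := x - (r / R) • (y - x) with hz
  have hcz : c ≤ f z := by
    change z ∈ {x | c ≤ f x}
    refine interior_subset (hball ?_)
    have hyx : ‖y - x‖ < R := mem_ball_iff_norm.1 (hBR hy)
    calc dist z x = r / R * ‖y - x‖ := by
          rw [dist_eq_norm, hz, sub_sub_cancel_left, norm_neg, norm_smul,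
            Real.norm_of_nonneg (by positivity)]
      _ < r / R * R := by gcongr
      _ = r := by field_simp
  have hxyz : a • y + b • z = x := by
    have hba : b * (r / R) = a := by simp only [a, b]; field_simp
    calc a • y + b • z = a • y + (b • x - (b * (r / R)) • (y - x)) := by
          rw [hz, smul_sub, smul_smul]
      _ = (a + b) • x := by rw [hba]; module
      _ = x := by rw [hab, one_smul]
  have hfy := hf.nonneg (mem_univ y)
  rw [le_rpow_inv_iff_of_pos hfy (div_nonneg (hf.nonneg (mem_univ x)) (by positivity)) ha,
    le_div_iff₀ (by positivity)]
  calc f y ^ a * c ^ b ≤ f y ^ a * f z ^ b := by gcongr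
    _ ≤ f (a • y + b • z) := hf.rpow_mul_rpow_le (mem_univ y) (mem_univ z) ha.le hb.le hab
    _ = f x := by rw [hxyz]

variable [FiniteDimensional ℝ E] [MeasurableSpace E] [BorelSpace E] (μ : Measure E)
  [μ.IsAddHaarMeasure]

theorem aemeasurable (hf : LogConcaveOn univ f) : AEMeasurable f μ := by
  have superlevel_convex (c : ℝ) : Convex ℝ {x | c ≤ f x} := by simpa using hf.convex_ge c
  have nullMeasurable : @Measurable (NullMeasurableSpace E μ) ℝ _ _ f :=
    measurable_of_Ici fun c ↦ (superlevel_convex c).nullMeasurableSet μ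
  exact NullMeasurable.aemeasurable fun _ hs ↦ nullMeasurable hs

theorem ae_eq_zero_of_interior_eq_empty (hf : LogConcaveOn univ f)
    (hint : ∀ c > 0, interior {x | c ≤ f x} = ∅) : f =ᵐ[μ] 0 := by
  have measure_ge_eq_zero (k : ℕ) : μ {x | 1 / ((k : ℝ) + 1) ≤ f x} = 0 := by
    have hconv : Convex ℝ {x | 1 / ((k : ℝ) + 1) ≤ f x} := by simpa using hf.convex_ge _
    refine measure_mono_null ?_ (hconv.addHaar_frontier μ)
    rw [frontier, hint _ (by positivity), sdiff_empty]
    exact subset_closure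
  filter_upwards [measure_eq_zero_iff_ae_notMem.1 (measure_iUnion_null measure_ge_eq_zero)]
    with x hx
  by_contra hne
  obtain ⟨k, hk⟩ := exists_nat_one_div_lt ((hf.nonneg (mem_univ x)).lt_of_ne' hne)
  exact hx (mem_iUnion.2 ⟨k, hk.le⟩)

theorem integrableOn_of_isBounded (hf : LogConcaveOn univ f) {B : Set E}
    (hB : Bornology.IsBounded B) : IntegrableOn f B μ := by
  by_cases hint : ∀ c > 0, interior {x | c ≤ f x} = ∅
  · exact ((integrable_zero E ℝ μ).congr
      (hf.ae_eq_zero_of_interior_eq_empty μ hint).symm).integrableOn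
  push Not at hint
  obtain ⟨c, hc, hfc⟩ := hint
  obtain ⟨R, hR⟩ := hB.subset_closedBall 0
  obtain ⟨M, hM⟩ := hf.bddAbove_image_of_isBounded hc hfc (isBounded_closedBall (x := 0) (r := R))
  refine IntegrableOn.mono_set (Measure.integrableOn_of_bounded (M := M)
    (measure_closedBall_lt_top (x := 0) (r := R)).ne (hf.aemeasurable μ).aestronglyMeasurable ?_) hR
  refine ae_restrict_of_forall_mem measurableSet_closedBall fun x hx ↦ ?_
  rw [Real.norm_of_nonneg (hf.nonneg (mem_univ x))]
  exact hM (mem_image_of_mem f hx)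

end Normed

end LogConcaveOn

section Dilation

variable {E : Type*} [AddCommGroup E] [Module ℝ E]

theorem convex_setOf_mem_smul {K : Set E} (hK : Convex ℝ K) :
    Convex ℝ {p : ℝ × E | 0 < p.1 ∧ p.2 ∈ p.1 • K} := by
  rintro ⟨s, x⟩ ⟨hs, hx⟩ ⟨t, y⟩ ⟨ht, hy⟩ a b ha hb hab
  refine ⟨(convex_Ioi (0 : ℝ)) hs ht ha hb hab, ?_⟩
  change a • x + b • y ∈ (a * s + b * t) • K
  rw [hK.add_smul (mul_nonneg ha hs.le) (mul_nonneg hb ht.le), mul_smul, mul_smul]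
  exact add_mem_add (smul_mem_smul_set hx) (smul_mem_smul_set hy)

theorem LogConcaveOn.indicator_smul {K : Set E} (hK : Convex ℝ K) {f : E → ℝ}
    (hf : LogConcaveOn univ f) :
    LogConcaveOn (Ioi (0 : ℝ) ×ˢ univ) fun p : ℝ × E ↦ (p.1 • K).indicator f p.2 := by
  have hf_snd : LogConcaveOn (Ioi (0 : ℝ) ×ˢ univ) (f ∘ LinearMap.snd ℝ ℝ E) :=
    (hf.comp_linearMap (LinearMap.snd ℝ ℝ E)).subset (subset_univ _)
      ((convex_Ioi 0).prod convex_univ)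
  refine hf_snd.indicator (t := {p | p.2 ∈ p.1 • K}) ?_
  convert! convex_setOf_mem_smul hK using 1
  ext p
  simp

end Dilation

theorem dilated_integral_logconcave_general {E : Type*} [NormedAddCommGroup E] [NormedSpace ℝ E]
    [FiniteDimensional ℝ E] [MeasurableSpace E] [BorelSpace E] (μ : Measure E)
    [μ.IsAddHaarMeasure] {K : Set E} (hKconv : Convex ℝ K) (hKbdd : Bornology.IsBounded K)
    {f : E → ℝ} (hf : LogConcaveOn univ f) :
    LogConcaveOn (Ioi 0) fun a : ℝ ↦ a ^ Module.finrank ℝ E * ∫ x in K, f (a • x) ∂μ := by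
  have nullMeasurable_smul (a : ℝ) : NullMeasurableSet (a • K) μ :=
    (hKconv.smul a).nullMeasurableSet μ
  have marginal : LogConcaveOn (Ioi 0) fun a : ℝ ↦ ∫ x, (a • K).indicator f x ∂μ :=
    (hf.indicator_smul hKconv).integral_prod_right
      (satisfiesPrekopaLeindler_of_isAddHaarMeasure μ) fun a _ ↦
        (hf.integrableOn_of_isBounded μ (hKbdd.smul₀ a)).integrable_indicator₀
          (nullMeasurable_smul a)
  refine marginal.congr fun a (ha : 0 < a) ↦ ?_
  dsimp only
  rw [integral_indicator₀ (nullMeasurable_smul a), Measure.setIntegral_comp_smul_of_pos μ f K ha,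
    smul_eq_mul, mul_inv_cancel_left₀ (by positivity)]

/-- Logconcavity of `a ↦ aⁿ Z(a)` (Lemma 6.2 of the paper, from Lovász–Vempala): for a
convex body `K ⊆ ℝⁿ` and a logconcave function `f`, with `Z(a) = ∫_K f(ax) dx`, the
function `a ↦ aⁿ Z(a)` is logconcave on `(0, ∞)`. -/
theorem dilated_integral_logconcave
    (n : ℕ)
    (K : Set (EuclideanSpace ℝ (Fin n)))
    (hKconv : Convex ℝ K) (hKcomp : IsCompact K) (hKne : (interior K).Nonempty)
    (f : EuclideanSpace ℝ (Fin n) → ℝ)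
    (hf0 : ∀ x, 0 ≤ f x)
    (hlc : ∀ x y : EuclideanSpace ℝ (Fin n), ∀ l ∈ Icc (0:ℝ) 1,
      f x ^ l * f y ^ (1 - l) ≤ f (l • x + (1 - l) • y))
    (Z : ℝ → ℝ) (hZ : ∀ a : ℝ, Z a = ∫ x in K, f (a • x))
    (s t : ℝ) (hs : 0 < s) (ht : 0 < t) (l : ℝ) (hl : l ∈ Icc (0:ℝ) 1) :
    (s ^ n * Z s) ^ l * (t ^ n * Z t) ^ (1 - l) ≤
      (l * s + (1 - l) * t) ^ n * Z (l * s + (1 - l) * t) := by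
  have hf : LogConcaveOn univ f := by
    refine ⟨convex_univ, fun x _ ↦ hf0 x, fun x _ y _ a b ha hb hab ↦ ?_⟩
    obtain rfl : b = 1 - a := by linarith
    exact hlc x y a ⟨ha, by linarith⟩
  simpa [hZ] using (dilated_integral_logconcave_general volume hKconv hKcomp.isBounded
    hf).rpow_mul_rpow_le hs ht hl.1 (sub_nonneg.2 hl.2) (add_sub_cancel l 1)
end
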